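/- Let G = ∏_{j=1}^t G^{(j)} be a finite direct product of groups, where each G^{(j)} is simple and non-commutative, and let T be a nonempty finite set. A subgroup H of G^T is normalized by the full diagonal subgroup Δ^T(G) = {(g)_{σ∈T} : g ∈ G} if and only if H has the form H = ∏_{j=1}^t ∏_{i=1}^{r_j} Δ^{T_i^{(j)}}(G^{(j)}), where for each j the sets T_1^{(j)}, …, T_{r_j}^{(j)} are pairwise disjoint nonempty subsets of T, and where each G^{(j)} is regarded as a subgroup of G so that Δ^{T'}(G^{(j)}) is a subgroup of (G^{(j)})^T ⊆ G^T. -/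

import Mathlib

/-!
Call a coordinate `(σ, j)` *active* for `H` if some `h ∈ H` has `h σ j ≠ 1`, and for fixed `j` call
`σ` and `τ` equivalent if `h σ j = h τ j` for every `h ∈ H`. The sets `T_i^{(j)}` are the
equivalence classes of the active `σ`. The point is that `H` is as large as these two constraints
permit.

Fix an active `(σ, j)`. For a set `A` of coordinates, the values `h σ j` of those `h ∈ H` that are
trivial on `A` form a normal subgroup of `G^{(j)}` (`vanishing`), hence everything as soon as it is
nontrivial. It is everything for `A = {(τ, k)}` whenever `(τ, k)` is not in the class of `(σ, j)`
(`vanishing_singleton`): there are `h ∈ H` and `g ∈ G` with `g k = h τ k` and `g j ≠ h σ j`, and for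
`h' ∈ H` the quotient of the conjugates of `h'` by `h` and by the diagonal element `g` is trivial at
`(τ, k)`, but nontrivial at `(σ, j)` if `h' σ j` does not commute with `(g j)⁻¹ * h σ j`.
Commutators of elements trivial on `A` and on `B` are trivial on `A ∪ B`, so, `G^{(j)}` being
non-commutative, one may take for `A` the whole complement of the class (`vanishing_finset`). Thus
`H` contains the partial diagonal over the class of every active `(σ, j)`, and these generate
everything satisfying the constraints (`constrained_le`).
-/

namespace ProductOfDiagonals

/-- In a simple non-commutative group the center is trivial. -/
lemma exists_not_commute {G : Type*} [Group G] [IsSimpleGroup G] (hnc : ∃ a b : G, a * b ≠ b * a)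
    {x : G} (hx : x ≠ 1) : ∃ y : G, x * y ≠ y * x := by
  by_contra! hcon
  rcases (inferInstance : (Subgroup.center G).Normal).eq_bot_or_eq_top with h | h
  · apply hx
    rw [← Subgroup.mem_bot, ← h, Subgroup.mem_center_iff]
    exact fun y => (hcon y).symm
  · obtain ⟨a, b, hab⟩ := hnc
    have hb : b ∈ Subgroup.center G := h ▸ Subgroup.mem_top b
    exact hab (Subgroup.mem_center_iff.1 hb a)

variable {ι T : Type*} {Gj : ι → Type*} [∀ j, Group (Gj j)]

/-- `H` is normalized by the diagonal subgroup of `(∏ j, Gj j)^T`. -/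
def DiagNormalized (H : Subgroup (T → ∀ j, Gj j)) : Prop :=
  ∀ g : ∀ j, Gj j, ∀ h ∈ H, (fun σ j => g j * h σ j * (g j)⁻¹) ∈ H

/-- The coordinate `(σ, j)` is nontrivial on `H`. -/
def Active (H : Subgroup (T → ∀ j, Gj j)) (j : ι) (σ : T) : Prop := ∃ h ∈ H, h σ j ≠ 1

/-- The coordinates `(σ, j)` and `(τ, j)` agree on `H`. -/
def Linked (H : Subgroup (T → ∀ j, Gj j)) (j : ι) (σ τ : T) : Prop := ∀ h ∈ H, h σ j = h τ j

/-- The families that are trivial at inactive coordinates and agree at linked coordinates. -/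
def constrained (H : Subgroup (T → ∀ j, Gj j)) : Subgroup (T → ∀ j, Gj j) where
  carrier := {f | (∀ j σ, ¬ Active H j σ → f σ j = 1) ∧ ∀ j σ τ, Linked H j σ τ → f σ j = f τ j}
  one_mem' := ⟨fun _ _ _ => rfl, fun _ _ _ _ => rfl⟩
  mul_mem' := by
    rintro a b ⟨ha, ha'⟩ ⟨hb, hb'⟩
    refine ⟨fun j σ h => ?_, fun j σ τ h => ?_⟩
    · simp [ha j σ h, hb j σ h]
    · simp [ha' j σ τ h, hb' j σ τ h]
  inv_mem' := by
    rintro a ⟨ha, ha'⟩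
    refine ⟨fun j σ h => ?_, fun j σ τ h => ?_⟩
    · simp [ha j σ h]
    · simp [ha' j σ τ h]

lemma le_constrained (H : Subgroup (T → ∀ j, Gj j)) : H ≤ constrained H := by
  intro h hh
  refine ⟨fun j σ hn => ?_, fun j σ τ hl => hl h hh⟩
  by_contra hne
  exact hn ⟨h, hh, hne⟩

/-- The values at `(σ, j)` of the elements of `H` that are trivial on the coordinate set `A`. -/
def vanishing (H : Subgroup (T → ∀ j, Gj j)) (j : ι) (σ : T) (A : Set (T × ι)) :
    Subgroup (Gj j) where
  carrier := {x | ∃ h ∈ H, h σ j = x ∧ ∀ p ∈ A, h p.1 p.2 = 1}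
  one_mem' := ⟨1, H.one_mem, rfl, fun _ _ => rfl⟩
  mul_mem' := by
    rintro _ _ ⟨a, ha, rfl, ha'⟩ ⟨b, hb, rfl, hb'⟩
    exact ⟨a * b, H.mul_mem ha hb, rfl, fun p hp => by simp [ha' p hp, hb' p hp]⟩
  inv_mem' := by
    rintro _ ⟨a, ha, rfl, ha'⟩
    exact ⟨a⁻¹, H.inv_mem ha, rfl, fun p hp => by simp [ha' p hp]⟩

variable {H : Subgroup (T → ∀ j, Gj j)}

open Classical in
lemma vanishing_normal (hH : DiagNormalized H) (j : ι) (σ : T) (A : Set (T × ι)) :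
    (vanishing H j σ A).Normal := by
  constructor
  rintro _ ⟨h, hh, rfl, hA⟩ g
  refine ⟨_, hH (Pi.mulSingle j g) h hh, by simp, fun p hp => by simp [hA p hp]⟩

lemma vanishing_eq_top [∀ j, IsSimpleGroup (Gj j)] (hH : DiagNormalized H) {j : ι} {σ : T}
    {A : Set (T × ι)} {x : Gj j} (hx : x ∈ vanishing H j σ A) (hx1 : x ≠ 1) :
    vanishing H j σ A = ⊤ := by
  refine (vanishing_normal hH j σ A).eq_bot_or_eq_top.resolve_left fun h => hx1 ?_
  rwa [h, Subgroup.mem_bot] at hx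

lemma vanishing_empty [∀ j, IsSimpleGroup (Gj j)] (hH : DiagNormalized H) {j : ι} {σ : T}
    (hσ : Active H j σ) : vanishing H j σ ∅ = ⊤ := by
  obtain ⟨h, hh, hne⟩ := hσ
  exact vanishing_eq_top hH ⟨h, hh, rfl, by simp⟩ hne

open Classical in
lemma vanishing_singleton [∀ j, IsSimpleGroup (Gj j)]
    (hnc : ∀ j, ∃ a b : Gj j, a * b ≠ b * a) (hH : DiagNormalized H) {j : ι} {σ : T}
    (hσ : Active H j σ) {τ : T} {k : ι} (hp : k = j → ¬ Linked H j σ τ) :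
    vanishing H j σ {(τ, k)} = ⊤ := by
  obtain ⟨h, hh, g, hg, hgj⟩ : ∃ h ∈ H, ∃ g : ∀ i, Gj i, g k = h τ k ∧ g j ≠ h σ j := by
    by_cases e : k = j
    · subst e
      have := hp rfl
      unfold Linked at this
      push Not at this
      obtain ⟨h, hh, hne⟩ := this
      exact ⟨h, hh, h τ, rfl, hne.symm⟩
    · obtain ⟨y, hy⟩ := exists_ne (1 : Gj j)
      exact ⟨1, H.one_mem, Pi.mulSingle j y, by simp [e], by simpa using hy⟩
  have hne : (g j)⁻¹ * h σ j ≠ 1 := fun e => hgj (inv_mul_eq_one.1 e)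
  obtain ⟨x, hx⟩ := exists_not_commute (hnc j) hne
  obtain ⟨h', hh', rfl, -⟩ : x ∈ vanishing H j σ ∅ := vanishing_empty hH hσ ▸ Subgroup.mem_top x
  refine vanishing_eq_top (x := h σ j * h' σ j * (h σ j)⁻¹ * (g j * h' σ j * (g j)⁻¹)⁻¹) hH
    ⟨_, H.mul_mem (H.mul_mem (H.mul_mem hh hh') (H.inv_mem hh)) (H.inv_mem (hH g h' hh')),
      rfl, ?_⟩ ?_
  · rintro _ rfl
    simp [hg]
  · intro e
    apply hx
    have e' := mul_inv_eq_one.1 e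
    calc (g j)⁻¹ * h σ j * h' σ j = (g j)⁻¹ * (h σ j * h' σ j * (h σ j)⁻¹) * h σ j := by group
      _ = h' σ j * ((g j)⁻¹ * h σ j) := by rw [e']; group

lemma vanishing_finset [∀ j, IsSimpleGroup (Gj j)]
    (hnc : ∀ j, ∃ a b : Gj j, a * b ≠ b * a) (hH : DiagNormalized H) {j : ι} {σ : T}
    (hσ : Active H j σ) (A : Finset (T × ι))
    (hA : ∀ p ∈ A, p.2 = j → ¬ Linked H j σ p.1) : vanishing H j σ (A : Set (T × ι)) = ⊤ := by
  classical
  induction A using Finset.induction_on with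
  | empty => simpa using vanishing_empty hH hσ
  | insert p A _ ih =>
    have h1 := ih fun q hq => hA q (Finset.mem_insert_of_mem hq)
    have h2 := vanishing_singleton hnc hH hσ (hA p (Finset.mem_insert_self p A))
    obtain ⟨a, b, hab⟩ := hnc j
    obtain ⟨u, hu, rfl, huA⟩ := h1 ▸ Subgroup.mem_top a
    obtain ⟨v, hv, rfl, hvp⟩ := h2 ▸ Subgroup.mem_top b
    refine vanishing_eq_top (x := u σ j * v σ j * (u σ j)⁻¹ * (v σ j)⁻¹) hH
      ⟨_, H.mul_mem (H.mul_mem (H.mul_mem hu hv) (H.inv_mem hu)) (H.inv_mem hv), rfl, ?_⟩ ?_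
    · intro q hq
      rcases Finset.mem_insert.1 (Finset.mem_coe.1 hq) with rfl | hq
      · simp [hvp q rfl]
      · simp [huA q hq]
    · intro e
      exact hab (mul_inv_eq_iff_eq_mul.1 (mul_inv_eq_one.1 e))

/-- `H` contains the partial diagonal over the class of an active coordinate. -/
lemma exists_partial_diagonal [Finite T] [Finite ι] [∀ j, IsSimpleGroup (Gj j)]
    (hnc : ∀ j, ∃ a b : Gj j, a * b ≠ b * a) (hH : DiagNormalized H) {j : ι} {σ : T}
    (hσ : Active H j σ) (x : Gj j) :
    ∃ h ∈ H, h σ j = x ∧ ∀ τ k, (k = j → ¬ Linked H j σ τ) → h τ k = 1 := by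
  classical
  cases nonempty_fintype T
  cases nonempty_fintype ι
  have := vanishing_finset hnc hH hσ
    {p : T × ι | p.2 = j → ¬ Linked H j σ p.1} (fun p hp => by simpa using hp)
  obtain ⟨h, hh, hx, hA⟩ := this ▸ Subgroup.mem_top x
  exact ⟨h, hh, hx, fun τ k hk => hA (τ, k) (by simpa using hk)⟩

/-- Dividing `f` by the partial diagonal over the class of a coordinate where `f` is nontrivial
shrinks the support of `f`. -/
lemma constrained_le [Finite T] [Finite ι] [∀ j, IsSimpleGroup (Gj j)]
    (hnc : ∀ j, ∃ a b : Gj j, a * b ≠ b * a) (hH : DiagNormalized H) : constrained H ≤ H := by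
  suffices ∀ n, ∀ f ∈ constrained H, {p : T × ι | f p.1 p.2 ≠ 1}.ncard = n → f ∈ H from
    fun f hf => this _ f hf rfl
  intro n
  induction n using Nat.strong_induction_on with
  | _ n ih =>
    intro f hf hn
    by_cases h1 : f = 1
    · exact h1 ▸ H.one_mem
    obtain ⟨σ, j, hne⟩ : ∃ σ j, f σ j ≠ 1 := by
      by_contra! hcon
      exact h1 (funext fun σ => funext fun j => hcon σ j)
    have hσ : Active H j σ := by
      by_contra hna
      exact hne (hf.1 j σ hna)
    obtain ⟨h, hh, hx, hz⟩ := exists_partial_diagonal hnc hH hσ (f σ j)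
    have hmem : f * h⁻¹ ∈ constrained H :=
      Subgroup.mul_mem _ hf (Subgroup.inv_mem _ (le_constrained H hh))
    have hlt : {p : T × ι | (f * h⁻¹) p.1 p.2 ≠ 1}.ncard < n := by
      rw [← hn]
      refine Set.ncard_lt_ncard ⟨?_, fun hsub => ?_⟩ (Set.toFinite _)
      · rintro ⟨τ, k⟩ hp hfp
        apply hp
        -- `h` agrees with `f` on the class of `(σ, j)` and is trivial elsewhere
        by_cases hc : k = j ∧ Linked H j σ τ
        · obtain ⟨rfl, hl⟩ := hc
          change f τ k * (h τ k)⁻¹ = 1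
          rw [← hl h hh, hx, hf.2 k σ τ hl, mul_inv_cancel]
        · push Not at hc
          change f τ k * (h τ k)⁻¹ = 1
          rw [hz τ k hc, hfp]
          simp
      · have : (σ, j) ∈ {p : T × ι | (f * h⁻¹) p.1 p.2 ≠ 1} := hsub hne
        apply this
        change f σ j * (h σ j)⁻¹ = 1
        rw [hx, mul_inv_cancel]
    have := H.mul_mem (ih _ hlt _ hmem rfl) hh
    simpa using this

lemma Linked.active {j : ι} {σ τ : T} (h : Linked H j σ τ) (hσ : Active H j σ) : Active H j τ := by
  obtain ⟨u, hu, hne⟩ := hσ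
  exact ⟨u, hu, h u hu ▸ hne⟩

/-- For each `j`, an enumeration without repetition of the classes of active coordinates. -/
lemma exists_enumeration [Finite T] (H : Subgroup (T → ∀ j, Gj j)) :
    ∃ (r : ι → ℕ) (Ts : (j : ι) → Fin (r j) → Set T),
      (∀ j i, ∃ σ, Active H j σ ∧ Ts j i = {τ | Linked H j σ τ}) ∧
      (∀ j, Function.Injective (Ts j)) ∧
      (∀ j σ, Active H j σ → ∃ i, Ts j i = {τ | Linked H j σ τ}) := by
  let C : ι → Set (Set T) := fun j => {C | ∃ σ, Active H j σ ∧ C = {τ | Linked H j σ τ}}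
  let e : ∀ j, C j ≃ Fin (Nat.card (C j)) := fun j => Finite.equivFin _
  refine ⟨fun j => Nat.card (C j), fun j i => ((e j).symm i).1, fun j i => ((e j).symm i).2,
    fun j => Subtype.val_injective.comp (e j).symm.injective, fun j σ hσ => ?_⟩
  exact ⟨e j ⟨_, σ, hσ, rfl⟩, congrArg Subtype.val ((e j).symm_apply_apply _)⟩

end ProductOfDiagonals

open ProductOfDiagonals in
/-- Let `G = ∏_{j=1}^t G^{(j)}` be a finite direct product of simple
non-commutative groups and `T` a nonempty finite set.  A subgroup `H` of `G^T` is normalized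
by the full diagonal subgroup `Δ^T(G)` if and only if
`H = ∏_{j=1}^t ∏_{i=1}^{r_j} Δ^{T_i^{(j)}}(G^{(j)})` for pairwise disjoint nonempty subsets
`T_1^{(j)}, …, T_{r_j}^{(j)}` of `T` (for each `j`). -/
theorem product_of_diagonals_of_product {t : ℕ} {Gj : Fin t → Type*}
    [∀ j, Group (Gj j)] [∀ j, IsSimpleGroup (Gj j)]
    (hnc : ∀ j, ∃ a b : Gj j, a * b ≠ b * a)
    {T : Type*} [Fintype T] [Nonempty T]
    (H : Subgroup (T → ∀ j, Gj j)) :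
    (∀ g : ∀ j, Gj j, ∀ h ∈ H, (fun σ j => g j * h σ j * (g j)⁻¹) ∈ H) ↔
      ∃ (r : Fin t → ℕ) (Ts : (j : Fin t) → Fin (r j) → Set T),
        (∀ j i, (Ts j i).Nonempty) ∧
        (∀ j, Pairwise fun i i' => Disjoint (Ts j i) (Ts j i')) ∧
        (∀ f : T → ∀ j, Gj j, f ∈ H ↔
          ∀ j, ∃ c : Fin (r j) → Gj j,
            (∀ i, ∀ σ ∈ Ts j i, f σ j = c i) ∧
            (∀ σ, (∀ i, σ ∉ Ts j i) → f σ j = 1)) := by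
  constructor
  · intro hH
    replace hH : DiagNormalized H := hH
    have heq : H = constrained H := le_antisymm (le_constrained H) (constrained_le hnc hH)
    obtain ⟨r, Ts, hTs, hinj, hsurj⟩ := exists_enumeration H
    refine ⟨r, Ts, ?_, ?_, ?_⟩
    · intro j i
      obtain ⟨σ, -, hC⟩ := hTs j i
      rw [hC]
      exact ⟨σ, fun _ _ => rfl⟩
    · intro j i i' hii
      rw [Set.disjoint_left]
      intro τ h1 h2
      apply hii
      apply hinj j
      obtain ⟨σ, -, hC⟩ := hTs j i
      obtain ⟨σ', -, hC'⟩ := hTs j i'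
      rw [hC] at h1 ⊢
      rw [hC'] at h2 ⊢
      ext ρ
      exact ⟨fun h u hu => (h2 u hu).trans ((h1 u hu).symm.trans (h u hu)),
        fun h u hu => (h1 u hu).trans ((h2 u hu).symm.trans (h u hu))⟩
    · intro f
      constructor
      · intro hf j
        choose s hs hC using fun i => hTs j i
        refine ⟨fun i => f (s i) j, fun i σ hσ => ?_, fun σ hσ => ?_⟩
        · rw [hC i] at hσ
          exact (hσ f hf).symm
        · refine (le_constrained H hf).1 j σ fun ha => ?_
          obtain ⟨i, hi⟩ := hsurj j σ ha
          apply hσ i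
          rw [hi]
          exact fun _ _ => rfl
      · intro hf
        rw [heq]
        refine ⟨fun j σ hna => ?_, fun j σ τ hl => ?_⟩
        · obtain ⟨c, -, hc⟩ := hf j
          refine hc σ fun i hi => hna ?_
          obtain ⟨ρ, hρ, hC⟩ := hTs j i
          rw [hC] at hi
          exact Linked.active hi hρ
        · obtain ⟨c, hc1, hc⟩ := hf j
          by_cases hσ : ∃ i, σ ∈ Ts j i
          · obtain ⟨i, hi⟩ := hσ
            rw [hc1 i σ hi, hc1 i τ]
            obtain ⟨ρ, hρ, hC⟩ := hTs j i
            rw [hC] at hi ⊢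
            exact fun u hu => (hi u hu).trans (hl u hu)
          · push Not at hσ
            rw [hc σ hσ, hc τ]
            intro i hi
            apply hσ i
            obtain ⟨ρ, hρ, hC⟩ := hTs j i
            rw [hC] at hi ⊢
            exact fun u hu => (hi u hu).trans (hl u hu).symm
  · rintro ⟨r, Ts, -, -, hf⟩ g h hh
    rw [hf] at hh ⊢
    intro j
    obtain ⟨c, hc1, hc2⟩ := hh j
    refine ⟨fun i => g j * c i * (g j)⁻¹, fun i σ hσ => ?_, fun σ hσ => ?_⟩
    · simp only [hc1 i σ hσ]
    · simp [hc2 σ hσ]
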